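/- arXiv:2307.12720 — 3 statements merged into one kernel-verified Lean document; each statement's English description precedes it below -/
import Mathlib

section
/- For every m ≥ 2, the number of OT-admissible words of length m whose leftmost symbol equals 2 is exactly N8(m−1)/2, and the same holds for leftmost symbol 5. -/
namespace OTLOCO

def B1 : Finset (Fin 8) := {0, 1, 4, 5}
def B2 : Finset (Fin 8) := {2, 3, 6, 7}

def OTpair (a b : Fin 8) : Prop :=
  (a = 2 ∧ b ∈ B1) ∨ (a ∈ B1 ∧ b = 2) ∨ (a = 5 ∧ b ∈ B2) ∨ (a ∈ B2 ∧ b = 5)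

def OTtriple (a x b : Fin 8) : Prop :=
  (a ∈ ({0, 1, 4} : Finset (Fin 8)) ∧ x ∈ ({3, 6} : Finset (Fin 8)) ∧
    b ∈ ({0, 1, 4} : Finset (Fin 8))) ∨
  (a ∈ ({3, 6, 7} : Finset (Fin 8)) ∧ x ∈ ({1, 4} : Finset (Fin 8)) ∧
    b ∈ ({3, 6, 7} : Finset (Fin 8)))

instance (a b : Fin 8) : Decidable (OTpair a b) := by unfold OTpair; infer_instance
instance (a x b : Fin 8) : Decidable (OTtriple a x b) := by unfold OTtriple; infer_instance

/-- A word `w : Fin m → Fin 8` (index `0` is the leftmost symbol) is OT-admissible. -/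
def OTadm {m : ℕ} (w : Fin m → Fin 8) : Prop :=
  (∀ i j : Fin m, (j : ℕ) = (i : ℕ) + 1 → ¬ OTpair (w i) (w j)) ∧
  (∀ i j k : Fin m, (j : ℕ) = (i : ℕ) + 1 → (k : ℕ) = (i : ℕ) + 2 →
    ¬ OTtriple (w i) (w j) (w k))

instance {m : ℕ} : DecidablePred (@OTadm m) := fun w => by
  unfold OTadm; infer_instance

/-- Number of OT-admissible words of length `m`, with the convention `N8 0 = 2`. -/
def N8 (m : ℕ) : ℕ :=
  if m = 0 then 2
  else (Finset.univ.filter (fun w : Fin m → Fin 8 => OTadm w)).card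


theorem adm_cons {n : ℕ} (c : Fin 8) (h3 : ∀ x b, ¬ OTtriple c x b) (w : Fin (n+1) → Fin 8) :
    OTadm (Fin.cons c w : Fin (n+2) → Fin 8) ↔ OTadm w ∧ ¬ OTpair c (w 0) := by
  constructor
  · rintro ⟨h, h'⟩
    refine ⟨⟨fun i j hij => ?_, fun i j k hij hik => ?_⟩, ?_⟩
    · simpa using h i.succ j.succ (by simp; omega)
    · simpa using h' i.succ j.succ k.succ (by simp; omega) (by simp; omega)
    · exact h 0 (Fin.succ 0) (by simp)
  · rintro ⟨⟨h, h'⟩, h0⟩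
    refine ⟨fun i j hij => ?_, fun i j k hij hik => ?_⟩
    · rcases Fin.eq_zero_or_eq_succ j with rfl | ⟨j, rfl⟩
      · simp at hij
      rcases Fin.eq_zero_or_eq_succ i with rfl | ⟨i, rfl⟩
      · have : j = 0 := by ext; simpa using hij
        subst this
        exact h0
      · simp only [Fin.cons_succ]
        exact h i j (by simpa using hij)
    · rcases Fin.eq_zero_or_eq_succ j with rfl | ⟨j, rfl⟩
      · simp at hij
      rcases Fin.eq_zero_or_eq_succ k with rfl | ⟨k, rfl⟩
      · simp at hik
      rcases Fin.eq_zero_or_eq_succ i with rfl | ⟨i, rfl⟩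
      · exact h3 _ _
      · simp only [Fin.cons_succ]
        simp only [Fin.val_succ] at hij hik
        exact h' i j k (by omega) (by omega)

theorem card_cons {n : ℕ} (c : Fin 8) (h3 : ∀ x b, ¬ OTtriple c x b) :
    (Finset.univ.filter (fun w : Fin (n+2) → Fin 8 => OTadm w ∧ w 0 = c)).card =
    (Finset.univ.filter (fun w : Fin (n+1) → Fin 8 => OTadm w ∧ ¬ OTpair c (w 0))).card := by
  symm
  refine Finset.card_bij (fun w _ => (Fin.cons c w : Fin (n+2) → Fin 8)) ?_ ?_ ?_
  · intro w hw
    simp only [Finset.mem_filter, Finset.mem_univ, true_and] at hw ⊢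
    exact ⟨(adm_cons c h3 w).2 hw, rfl⟩
  · intro a _ b _ hab
    exact Fin.cons_right_injective (α := fun _ => Fin 8) c hab
  · intro w hw
    simp only [Finset.mem_filter, Finset.mem_univ, true_and] at hw
    have e : (Fin.cons c (Fin.tail w) : Fin (n+2) → Fin 8) = w := by
      rw [← hw.2]; exact Fin.cons_self_tail w
    refine ⟨Fin.tail w, ?_, e⟩
    simp only [Finset.mem_filter, Finset.mem_univ, true_and]
    rw [← adm_cons c h3, e]
    exact hw.1

theorem pair_rev : ∀ a b : Fin 8, OTpair a.rev b.rev ↔ OTpair a b := by decide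
theorem triple_rev : ∀ a b c : Fin 8, OTtriple a.rev b.rev c.rev ↔ OTtriple a b c := by decide

theorem adm_rev {n : ℕ} (w : Fin n → Fin 8) : OTadm (fun i => (w i).rev) ↔ OTadm w := by
  simp only [OTadm, pair_rev, triple_rev]

theorem card_rev (n : ℕ) :
    (Finset.univ.filter (fun w : Fin (n+1) → Fin 8 => OTadm w ∧ ¬ OTpair 2 (w 0))).card =
    (Finset.univ.filter (fun w : Fin (n+1) → Fin 8 => OTadm w ∧ ¬ OTpair 5 (w 0))).card := by
  refine Finset.card_nbij' (fun w i => (w i).rev) (fun w i => (w i).rev) ?_ ?_ ?_ ?_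
  · intro w hw
    simp only [Finset.coe_filter, Finset.mem_univ, true_and, Set.mem_ofPred_eq] at hw ⊢
    rw [adm_rev]
    exact ⟨hw.1, fun h => hw.2 ((pair_rev 2 (w 0)).1 h)⟩
  · intro w hw
    simp only [Finset.coe_filter, Finset.mem_univ, true_and, Set.mem_ofPred_eq] at hw ⊢
    rw [adm_rev]
    exact ⟨hw.1, fun h => hw.2 ((pair_rev 5 (w 0)).1 h)⟩
  · intro w _; simp
  · intro w _; simp

theorem pair_compl : ∀ a : Fin 8, ¬ OTpair 5 a ↔ ¬ ¬ OTpair 2 a := by decide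

theorem card_add (n : ℕ) :
    (Finset.univ.filter (fun w : Fin (n+1) → Fin 8 => OTadm w ∧ ¬ OTpair 2 (w 0))).card +
    (Finset.univ.filter (fun w : Fin (n+1) → Fin 8 => OTadm w ∧ ¬ OTpair 5 (w 0))).card
      = N8 (n+1) := by
  simp only [pair_compl, N8, Nat.succ_ne_zero, if_false]
  rw [← Finset.filter_filter, ← Finset.filter_filter]
  exact Finset.card_filter_add_card_filter_not _

theorem leftmost_two_and_five_counts (m : ℕ) (hm : 2 ≤ m) :
    (((Finset.univ.filter (fun w : Fin m → Fin 8 =>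
        OTadm w ∧ w ⟨0, by omega⟩ = (2 : Fin 8))).card : ℚ) = (N8 (m - 1) : ℚ) / 2) ∧
    (((Finset.univ.filter (fun w : Fin m → Fin 8 =>
        OTadm w ∧ w ⟨0, by omega⟩ = (5 : Fin 8))).card : ℚ) = (N8 (m - 1) : ℚ) / 2) := by
  obtain ⟨n, rfl⟩ : ∃ n, m = n + 2 := ⟨m - 2, by omega⟩
  have h2 := card_cons (n := n) 2 (by decide)
  have h5 := card_cons (n := n) 5 (by decide)
  have hr := card_rev n
  have ha := card_add n
  rw [← h2, ← h5] at ha hr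
  have e : n + 2 - 1 = n + 1 := rfl
  rw [e, ← ha]
  push_cast
  constructor
  · change ((Finset.univ.filter (fun w : Fin (n+2) → Fin 8 => OTadm w ∧ w 0 = 2)).card : ℚ) = _
    rw [← hr]; ring
  · change ((Finset.univ.filter (fun w : Fin (n+2) → Fin 8 => OTadm w ∧ w 0 = 5)).card : ℚ) = _
    rw [← hr]; ring

end OTLOCO
end

section
/- Let N8₀(m) denote the number of OT-admissible words of length m whose leftmost symbol equals 0. For every m ≥ 2, one has N8₀(m) = (N8(m) − N8(m−1))/6. -/
namespace OTLOCO

/-- Number of OT-admissible words of length `m` whose leftmost symbol is `0`. -/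
def N80 (m : ℕ) : ℕ :=
  (Finset.univ.filter (fun w : Fin m → Fin 8 =>
    OTadm w ∧ ∀ i : Fin m, (i : ℕ) = 0 → w i = 0)).card

lemma adm_cons_s6 {n : ℕ} (a : Fin 8) (v : Fin (n + 1) → Fin 8) :
    OTadm (Fin.cons a v : Fin (n + 2) → Fin 8) ↔
      OTadm v ∧ ¬ OTpair a (v 0) ∧
        ∀ j : Fin (n + 1), (j : ℕ) = 1 → ¬ OTtriple a (v 0) (v j) := by
  constructor
  · rintro ⟨h1, h2⟩
    refine ⟨⟨?_, ?_⟩, ?_, ?_⟩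
    · intro i j hij
      have := h1 i.succ j.succ (by simp [hij])
      simpa using this
    · intro i j k hij hik
      have := h2 i.succ j.succ k.succ (by simp [hij]) (by simp [hik])
      simpa using this
    · have := h1 0 (Fin.succ 0) (by simp)
      simpa only [Fin.cons_succ, Fin.cons_zero] using this
    · intro j hj
      have := h2 0 (Fin.succ 0) j.succ (by simp) (by simp [hj])
      simpa only [Fin.cons_succ, Fin.cons_zero] using this
  · rintro ⟨⟨h1, h2⟩, h3, h4⟩
    constructor
    · intro i j hij
      cases j using Fin.cases with
      | zero => simp at hij
      | succ j =>
        cases i using Fin.cases with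
        | zero =>
          have : j = 0 := by ext; simpa using hij
          subst this
          simpa only [Fin.cons_succ, Fin.cons_zero] using h3
        | succ i =>
          simpa only [Fin.cons_succ] using h1 i j (by simpa using hij)
    · intro i j k hij hik
      cases j using Fin.cases with
      | zero => simp at hij
      | succ j =>
        cases k using Fin.cases with
        | zero => simp at hik
        | succ k =>
          cases i using Fin.cases with
          | zero =>
            have : j = 0 := by ext; simpa using hij
            subst this
            simpa only [Fin.cons_succ, Fin.cons_zero] using h4 k (by simpa using hik)
          | succ i =>
            simp only [Fin.cons_succ]
            refine h2 i j k (by simpa using hij) ?_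
            simp only [Fin.val_succ] at hik
            omega

/-- Words whose first symbol is `a`, counted by their tails. -/
def cnt (n : ℕ) (a : Fin 8) : ℕ :=
  (Finset.univ.filter (fun v : Fin (n + 1) → Fin 8 =>
    OTadm (Fin.cons a v : Fin (n + 2) → Fin 8))).card

/-- The symmetry exchanging the two blocks. -/
def sw : Fin 8 → Fin 8 := ![7, 3, 5, 1, 6, 2, 4, 0]

lemma sw_sw : Function.Involutive sw := by unfold Function.Involutive; decide

lemma pair_sw : ∀ a b, OTpair (sw a) (sw b) ↔ OTpair a b := by decide

lemma triple_sw : ∀ a x b, OTtriple (sw a) (sw x) (sw b) ↔ OTtriple a x b := by decide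

lemma adm_sw {m : ℕ} (w : Fin m → Fin 8) : OTadm (fun i => sw (w i)) ↔ OTadm w := by
  simp only [OTadm, pair_sw, triple_sw]

lemma cnt_sw (n : ℕ) (a : Fin 8) : cnt n (sw a) = cnt n a := by
  unfold cnt
  refine Finset.card_bij' (fun v _ i => sw (v i)) (fun v _ i => sw (v i)) ?_ ?_ ?_ ?_
  · intro v hv
    simp only [Finset.mem_filter, Finset.mem_univ, true_and, adm_cons_s6] at hv ⊢
    rw [adm_sw, ← pair_sw, sw_sw]
    refine ⟨hv.1, hv.2.1, fun j hj => ?_⟩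
    rw [← triple_sw, sw_sw, sw_sw]
    exact hv.2.2 j hj
  · intro v hv
    simp only [Finset.mem_filter, Finset.mem_univ, true_and, adm_cons_s6] at hv ⊢
    rw [adm_sw, pair_sw]
    refine ⟨hv.1, hv.2.1, fun j hj => ?_⟩
    rw [triple_sw]
    exact hv.2.2 j hj
  · intro v _; funext i; exact sw_sw _
  · intro v _; funext i; exact sw_sw _

lemma cnt_congr (n : ℕ) (a : Fin 8) (h1 : ∀ b, OTpair a b ↔ OTpair 0 b)
    (h2 : ∀ x b, ¬ OTpair 0 x → (OTtriple a x b ↔ OTtriple 0 x b)) : cnt n a = cnt n 0 := by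
  unfold cnt
  congr 1
  ext v
  simp only [Finset.mem_filter, Finset.mem_univ, true_and, adm_cons_s6, h1]
  refine and_congr_right fun _ => and_congr_right fun h => ?_
  simp only [h2 _ _ h]

lemma cnt_25 (n : ℕ) : cnt n 2 + cnt n 5 = N8 (n + 1) := by
  unfold cnt N8
  rw [if_neg (Nat.succ_ne_zero n)]
  rw [← Finset.card_filter_add_card_filter_not
    (s := Finset.univ.filter (fun w : Fin (n + 1) → Fin 8 => OTadm w)) (fun v => v 0 ∈ B2)]
  have p2 : ∀ b, ¬ OTpair 2 b ↔ b ∈ B2 := by decide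
  have p5 : ∀ b, ¬ OTpair 5 b ↔ ¬ b ∈ B2 := by decide
  have t2 : ∀ x b, ¬ OTtriple 2 x b := by decide
  have t5 : ∀ x b, ¬ OTtriple 5 x b := by decide
  congr 2
  · ext v
    simp only [Finset.mem_filter, Finset.mem_univ, true_and, adm_cons_s6, p2, t2]
    simp
  · ext v
    simp only [Finset.mem_filter, Finset.mem_univ, true_and, adm_cons_s6, p5, t5]
    simp

lemma N8_sum (n : ℕ) : N8 (n + 2) = ∑ a, cnt n a := by
  unfold N8 cnt
  rw [if_neg (Nat.succ_ne_zero _)]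
  simp only [Finset.card_filter]
  rw [← (Fin.consEquiv (fun _ : Fin (n + 2) => Fin 8)).sum_comp, Fintype.sum_prod_type]
  rfl

lemma N80_cnt (n : ℕ) : N80 (n + 2) = cnt n 0 := by
  unfold N80 cnt
  refine Finset.card_bij' (fun w _ => Fin.tail w) (fun v _ => Fin.cons 0 v) ?_ ?_ ?_ ?_
  · intro w hw
    simp only [Finset.mem_filter, Finset.mem_univ, true_and] at hw ⊢
    have h := Fin.cons_self_tail w
    rw [hw.2 0 rfl] at h
    rw [h]; exact hw.1
  · intro v hv
    simp only [Finset.mem_filter, Finset.mem_univ, true_and] at hv ⊢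
    refine ⟨hv, fun i hi => ?_⟩
    have : i = 0 := by ext; simpa using hi
    subst this; rfl
  · intro w hw
    simp only [Finset.mem_filter, Finset.mem_univ, true_and] at hw
    have h := Fin.cons_self_tail w
    rw [hw.2 0 rfl] at h
    exact h
  · intro v _; exact Fin.tail_cons _ _

theorem N80_eq (m : ℕ) (hm : 2 ≤ m) :
    (N80 m : ℚ) = ((N8 m : ℚ) - (N8 (m - 1) : ℚ)) / 6 := by
  obtain ⟨n, rfl⟩ : ∃ n, m = n + 2 := ⟨m - 2, by omega⟩
  have h1 : cnt n 1 = cnt n 0 := cnt_congr n 1 (by decide) (by decide)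
  have h4 : cnt n 4 = cnt n 0 := cnt_congr n 4 (by decide) (by decide)
  have h7 : cnt n 7 = cnt n 0 := cnt_sw n 0
  have h3 : cnt n 3 = cnt n 1 := cnt_sw n 1
  have h6 : cnt n 6 = cnt n 4 := cnt_sw n 4
  have h25 := cnt_25 n
  have hs := N8_sum n
  rw [Fin.sum_univ_eight] at hs
  have key : N8 (n + 2) = 6 * cnt n 0 + N8 (n + 1) := by omega
  rw [N80_cnt, show n + 2 - 1 = n + 1 from rfl, key]
  push_cast
  ring

end OTLOCO
end

section
/- The exponential growth rate of the number of ST-admissible words equals the capacity of the ST constraint: lim_{m→∞} (log₂ N4(m))/m = log₂(1 + √2), where 1 + √2 is the largest root of x² − 2x − 1. -/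
namespace STLOCO

/-- Forbidden 2-tuples of `ST⁴`, read left-to-right. -/
def STpair (a b : Fin 4) : Prop :=
  (a = 0 ∧ b = 1) ∨ (a = 1 ∧ b = 0) ∨ (a = 1 ∧ b = 2) ∨
  (a = 2 ∧ b = 1) ∨ (a = 2 ∧ b = 3) ∨ (a = 3 ∧ b = 2)

/-- Forbidden 3-tuples of `ST⁴`, read left-to-right. -/
def STtriple (a x b : Fin 4) : Prop :=
  (a = 0 ∧ x = 3 ∧ b = 0) ∨ (a = 3 ∧ x = 0 ∧ b = 3)

instance (a b : Fin 4) : Decidable (STpair a b) := by unfold STpair; infer_instance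
instance (a x b : Fin 4) : Decidable (STtriple a x b) := by unfold STtriple; infer_instance

/-- A word `w : Fin m → Fin 4` (index `0` is the leftmost symbol) is ST-admissible. -/
def STadm {m : ℕ} (w : Fin m → Fin 4) : Prop :=
  (∀ i j : Fin m, (j : ℕ) = (i : ℕ) + 1 → ¬ STpair (w i) (w j)) ∧
  (∀ i j k : Fin m, (j : ℕ) = (i : ℕ) + 1 → (k : ℕ) = (i : ℕ) + 2 →
    ¬ STtriple (w i) (w j) (w k))

instance {m : ℕ} : DecidablePred (@STadm m) := fun w => by
  unfold STadm; infer_instance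

/-- Number of ST-admissible words of length `m`, with the convention `N4 0 = 2`. -/
def N4 (m : ℕ) : ℕ :=
  if m = 0 then 2
  else (Finset.univ.filter (fun w : Fin m → Fin 4 => STadm w)).card
theorem adm_cons3 {m : ℕ} (p a b : Fin 4) (w : Fin m → Fin 4) :
    STadm (Fin.cons p (Fin.cons a (Fin.cons b w : Fin (m+1) → Fin 4) : Fin (m+2) → Fin 4) : Fin (m+3) → Fin 4) ↔
      (¬ STpair p a ∧ ¬ STtriple p a b) ∧
        STadm (Fin.cons a (Fin.cons b w : Fin (m+1) → Fin 4) : Fin (m+2) → Fin 4) := by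
  constructor
  · rintro ⟨h1, h2⟩
    refine ⟨⟨h1 0 1 (by simp), h2 0 1 2 (by simp) (by simp)⟩, ?_, ?_⟩
    · intro i j hij
      have := h1 i.succ j.succ (by simp [hij])
      simpa only [Fin.cons_succ] using this
    · intro i j k hij hik
      have := h2 i.succ j.succ k.succ (by simp [hij]) (by simp [hik])
      simpa only [Fin.cons_succ] using this
  · rintro ⟨⟨h1, h2⟩, h3, h4⟩
    constructor
    · intro i j hij
      induction i using Fin.cases with
      | zero =>
        have : j = 1 := Fin.ext (by simpa using hij)
        subst this
        exact h1
      | succ i =>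
        induction j using Fin.cases with
        | zero => simp at hij
        | succ j =>
          simp only [Fin.cons_succ]
          exact h3 i j (by simpa using hij)
    · intro i j k hij hik
      induction i using Fin.cases with
      | zero =>
        have : j = 1 := Fin.ext (by simpa using hij)
        subst this
        have : k = 2 := Fin.ext (by
          have h5 : 2 % (m + 2 + 1) = 2 := Nat.mod_eq_of_lt (by omega)
          simpa [h5] using hik)
        subst this
        exact h2
      | succ i =>
        induction j using Fin.cases with
        | zero => simp at hij
        | succ j =>
          induction k using Fin.cases with
          | zero => simp at hik
          | succ k =>
            simp only [Fin.cons_succ]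
            exact h4 i j k (by simpa using hij) (by simp at hik; omega)

/-- Number of admissible words of length `m + 2` starting with `p a`. -/
def DD (m : ℕ) (p a : Fin 4) : ℕ :=
  ∑ w : Fin m → Fin 4, if STadm (Fin.cons p (Fin.cons a w : Fin (m+1) → Fin 4) : Fin (m+2) → Fin 4) then 1 else 0

theorem sum_cons {m : ℕ} (f : (Fin (m+1) → Fin 4) → ℕ) :
    ∑ w, f w = ∑ b : Fin 4, ∑ w : Fin m → Fin 4, f (Fin.cons b w) := by
  rw [← Fintype.sum_prod_type' (f := fun b (w : Fin m → Fin 4) => f (Fin.cons b w))]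
  exact (Fintype.sum_equiv (Fin.consEquiv (fun _ => Fin 4)) _ _ (fun x => rfl)).symm

theorem DD_succ (m : ℕ) (p a : Fin 4) :
    DD (m+1) p a = ∑ b : Fin 4, if (¬ STpair p a ∧ ¬ STtriple p a b) then DD m a b else 0 := by
  unfold DD
  rw [sum_cons]
  refine Finset.sum_congr rfl fun b _ => ?_
  simp only [adm_cons3]
  split_ifs with h
  · simp [h]
  · simp [h]

theorem DD_zero (p a : Fin 4) : DD 0 p a = if STpair p a then 0 else 1 := by
  revert p a; decide

/-- Pell-type sequence. -/
def zt : ℕ → ℕ × ℕ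
  | 0 => (1, 1)
  | n + 1 => ((zt n).1 + 2 * (zt n).2, (zt n).1 + (zt n).2)

theorem DD_eq (m : ℕ) : ∀ p a : Fin 4, DD m p a =
    if STpair p a then 0
    else if a = 1 ∨ a = 2 ∨ (p = 0 ∧ a = 3) ∨ (p = 3 ∧ a = 0) then (zt m).2 else (zt m).1 := by
  induction m with
  | zero => intro p a; rw [DD_zero]; simp [zt]
  | succ m ih =>
    intro p a
    rw [DD_succ]
    simp only [ih, Fin.sum_univ_four, zt]
    fin_cases p <;> fin_cases a <;> simp [STpair, STtriple] <;> omega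

theorem N4_eq (m : ℕ) : N4 (m+2) = 2 * ((zt (m+1)).1 + (zt (m+1)).2) := by
  have : N4 (m+2) = ∑ p : Fin 4, ∑ a : Fin 4, DD m p a := by
    unfold N4 DD
    rw [if_neg (by omega), Finset.card_filter, sum_cons]
    refine Finset.sum_congr rfl fun b _ => ?_
    rw [sum_cons]
  rw [this]
  simp only [DD_eq, Fin.sum_univ_four, zt]
  simp [STpair]
  omega

theorem zt_pow (m : ℕ) : ((zt m).1 : ℝ) + √2 * (zt m).2 = (1 + √2) ^ (m+1) := by
  induction m with
  | zero => simp [zt]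
  | succ m ih =>
    rw [pow_succ, ← ih]
    simp only [zt]
    push_cast
    have : √2 * √2 = (2:ℝ) := Real.mul_self_sqrt (by norm_num)
    linear_combination (-((zt m).2 : ℝ)) * this

theorem N4_bounds (m : ℕ) (hm : 2 ≤ m) :
    (1 + √2) ^ m ≤ (N4 m : ℝ) ∧ (N4 m : ℝ) ≤ 2 * (1 + √2) ^ m := by
  obtain ⟨k, rfl⟩ := Nat.exists_eq_add_of_le' hm
  rw [N4_eq, ← zt_pow (k+1)]
  have h1 : (1:ℝ) ≤ √2 := Real.one_le_sqrt.mpr (by norm_num)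
  have h2 : √2 ≤ (2:ℝ) := by rw [Real.sqrt_le_left (by norm_num)]; norm_num
  have hz : (0:ℝ) ≤ (zt (k+1)).1 := Nat.cast_nonneg _
  have ht : (0:ℝ) ≤ (zt (k+1)).2 := Nat.cast_nonneg _
  push_cast
  constructor <;> nlinarith

theorem st_capacity :
    Filter.Tendsto (fun m : ℕ => Real.logb 2 (N4 m) / (m : ℝ)) Filter.atTop
      (nhds (Real.logb 2 (1 + Real.sqrt 2))) ∧
    (1 + Real.sqrt 2) ^ 2 - 2 * (1 + Real.sqrt 2) - 1 = 0 ∧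
    (∀ x : ℝ, x ^ 2 - 2 * x - 1 = 0 → x ≤ 1 + Real.sqrt 2) := by
  have hs : √2 * √2 = (2:ℝ) := Real.mul_self_sqrt (by norm_num)
  have h0 : (0:ℝ) < 1 + √2 := by positivity
  refine ⟨?_, by linear_combination hs, ?_⟩
  · set c := Real.logb 2 (1 + √2) with hc
    have hlim : Filter.Tendsto (fun m : ℕ => 1 / (m:ℝ) + c) Filter.atTop (nhds c) := by
      simpa using (tendsto_one_div_atTop_nhds_zero_nat (𝕜 := ℝ)).add_const c
    refine tendsto_of_tendsto_of_tendsto_of_le_of_le' tendsto_const_nhds hlim ?_ ?_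
    · filter_upwards [Filter.eventually_ge_atTop 2] with m hm
      have hm' : (0:ℝ) < m := by exact_mod_cast (by omega : 0 < m)
      rw [le_div_iff₀ hm']
      have := Real.logb_le_logb_of_le (b := 2) (by norm_num) (by positivity) (N4_bounds m hm).1
      rw [Real.logb_pow] at this
      linarith
    · filter_upwards [Filter.eventually_ge_atTop 2] with m hm
      have hm' : (0:ℝ) < m := by exact_mod_cast (by omega : 0 < m)
      have hN : (0:ℝ) < N4 m := lt_of_lt_of_le (by positivity) (N4_bounds m hm).1
      rw [div_le_iff₀ hm']
      have := Real.logb_le_logb_of_le (b := 2) (by norm_num) hN (N4_bounds m hm).2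
      rw [Real.logb_mul (by norm_num) (by positivity), Real.logb_pow,
        Real.logb_self_eq_one (by norm_num)] at this
      have e : (1 / (m:ℝ) + c) * m = 1 + m * c := by field_simp
      rw [e]; exact this
  · intro x hx
    by_contra! h
    have : 0 < √2 := by positivity
    nlinarith

end STLOCO
end
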